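/- arXiv:1802.04324 — 2 statements merged into one kernel-verified Lean document; each statement's English description precedes it below -/
import Mathlib

section
/- Let R be a 3-torsion free alternative ring. Then R is prime if and only if for all a, b ∈ R the following holds: if (a·x)·b = 0 for every x ∈ R, then a = 0 or b = 0. -/
/-- The Lie bracket (commutator) in a not-necessarily-associative ring. -/
def lieBr {R : Type*} [NonUnitalNonAssocRing R] (x y : R) : R := x * y - y * x

/-- `R` is an alternative ring: `(x*x)*y = x*(x*y)` and `(y*x)*x = y*(x*x)`. -/
def IsAlternative (R : Type*) [NonUnitalNonAssocRing R] : Prop :=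
  (∀ x y : R, x * x * y = x * (x * y)) ∧ (∀ x y : R, y * x * x = y * (x * x))

/-- The centre of a not-necessarily-associative ring: elements `r` whose associators
`(r,x,y)`, `(x,r,y)`, `(x,y,r)` all vanish and which commute with everything. -/
def ringCenter (R : Type*) [NonUnitalNonAssocRing R] : Set R :=
  {r | (∀ x y : R, r * x * y = r * (x * y)) ∧ (∀ x y : R, x * r * y = x * (r * y)) ∧
       (∀ x y : R, x * y * r = x * (y * r)) ∧ (∀ x : R, r * x = x * r)}

/-- `e` is a nontrivial idempotent: idempotent, nonzero and not a multiplicative identity. -/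
def IsNontrivialIdempotent {R : Type*} [NonUnitalNonAssocRing R] (e : R) : Prop :=
  e * e = e ∧ e ≠ 0 ∧ ¬ (∀ x : R, e * x = x ∧ x * e = x)

/-- Peirce component `R₁₁` relative to the idempotent `e`. -/
def peirce11 {R : Type*} [NonUnitalNonAssocRing R] (e : R) : Set R :=
  {x | e * x = x ∧ x * e = x}

/-- Peirce component `R₁₂` relative to the idempotent `e`. -/
def peirce12 {R : Type*} [NonUnitalNonAssocRing R] (e : R) : Set R :=
  {x | e * x = x ∧ x * e = 0}

/-- Peirce component `R₂₁` relative to the idempotent `e`. -/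
def peirce21 {R : Type*} [NonUnitalNonAssocRing R] (e : R) : Set R :=
  {x | e * x = 0 ∧ x * e = x}

/-- Peirce component `R₂₂` relative to the idempotent `e`. -/
def peirce22 {R : Type*} [NonUnitalNonAssocRing R] (e : R) : Set R :=
  {x | e * x = 0 ∧ x * e = 0}

/-- Condition (i): if `a₁₁ + a₂₂` commutes with every element of `R₁₂`, it is central. -/
def CondI {R : Type*} [NonUnitalNonAssocRing R] (e : R) : Prop :=
  ∀ a b : R, a ∈ peirce11 e → b ∈ peirce22 e →
    (∀ m ∈ peirce12 e, lieBr (a + b) m = 0) → a + b ∈ ringCenter R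

/-- Condition (ii): if `a₁₁ + a₂₂` commutes with every element of `R₂₁`, it is central. -/
def CondII {R : Type*} [NonUnitalNonAssocRing R] (e : R) : Prop :=
  ∀ a b : R, a ∈ peirce11 e → b ∈ peirce22 e →
    (∀ m ∈ peirce21 e, lieBr (a + b) m = 0) → a + b ∈ ringCenter R

/-- A map `φ` is Lie multiplicative if `φ [x,y] = [φ x, φ y]`. -/
def IsLieMultiplicative {R R' : Type*} [NonUnitalNonAssocRing R] [NonUnitalNonAssocRing R']
    (φ : R → R') : Prop :=
  ∀ x y : R, φ (lieBr x y) = lieBr (φ x) (φ y)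

/-- A map `D` is Lie triple derivable if
`D [[x,y],z] = [[D x,y],z] + [[x,D y],z] + [[x,y],D z]`. -/
def IsLieTripleDerivable {R : Type*} [NonUnitalNonAssocRing R] (D : R → R) : Prop :=
  ∀ x y z : R, D (lieBr (lieBr x y) z) =
    lieBr (lieBr (D x) y) z + lieBr (lieBr x (D y)) z + lieBr (lieBr x y) (D z)

/-- A map `D` is Lie derivable if `D [x,y] = [D x, y] + [x, D y]`. -/
def IsLieDerivable {R : Type*} [NonUnitalNonAssocRing R] (D : R → R) : Prop :=
  ∀ x y : R, D (lieBr x y) = lieBr (D x) y + lieBr x (D y)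

/-- `I` is a two-sided ideal (as a set) of the not-necessarily-associative ring `R`. -/
def IsTwoSidedIdealSet {R : Type*} [NonUnitalNonAssocRing R] (I : Set R) : Prop :=
  (0 : R) ∈ I ∧ (∀ a b : R, a ∈ I → b ∈ I → a + b ∈ I) ∧ (∀ a : R, a ∈ I → -a ∈ I) ∧
  (∀ r a : R, a ∈ I → r * a ∈ I ∧ a * r ∈ I)

/-- `R` is prime: for any two nonzero two-sided ideals `A`, `B`, some product `a*b` with
`a ∈ A`, `b ∈ B` is nonzero (i.e. `A·B ≠ 0`). -/
def IsPrimeRing (R : Type*) [NonUnitalNonAssocRing R] : Prop :=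
  ∀ A B : Set R, IsTwoSidedIdealSet A → IsTwoSidedIdealSet B → A ≠ {0} → B ≠ {0} →
    ∃ a ∈ A, ∃ b ∈ B, a * b ≠ 0

/-- `R` is 3-torsion free: `3x = 0` implies `x = 0`. -/
def ThreeTorsionFree (R : Type*) [NonUnitalNonAssocRing R] : Prop :=
  ∀ x : R, x + x + x = 0 → x = 0


/-! ## Basic identities in alternative rings -/

/-- The associator. -/
def asc {R : Type*} [NonUnitalNonAssocRing R] (x y z : R) : R := x * y * z - x * (y * z)

/-- The Kleinfeld function. -/
def kf {R : Type*} [NonUnitalNonAssocRing R] (w x y z : R) : R :=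
  asc (w * x) y z - x * asc w y z - asc x y z * w

section Alt

variable {R : Type*} [NonUnitalNonAssocRing R]

theorem left_alt (hR : IsAlternative R) (x y z : R) :
    x * y * z + y * x * z = x * (y * z) + y * (x * z) := by
  have h := hR.1 (x + y) z
  have h1 := hR.1 x z
  have h2 := hR.1 y z
  simp only [mul_add, add_mul] at h
  rw [h1, h2] at h
  have h3 := sub_eq_zero.mpr h
  rw [← sub_eq_zero, ← h3]
  abel

theorem right_alt (hR : IsAlternative R) (x y z : R) :
    z * x * y + z * y * x = z * (x * y) + z * (y * x) := by
  have h := hR.2 (x + y) z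
  have h1 := hR.2 x z
  have h2 := hR.2 y z
  simp only [mul_add, add_mul] at h
  rw [h1, h2] at h
  have h3 := sub_eq_zero.mpr h
  rw [← sub_eq_zero, ← h3]
  abel

theorem asc12 (hR : IsAlternative R) (x y z : R) : asc x y z = - asc y x z := by
  have h := left_alt hR x y z
  simp only [asc]
  linear_combination (norm := abel) h

theorem asc23 (hR : IsAlternative R) (x y z : R) : asc x y z = - asc x z y := by
  have h := right_alt hR y z x
  simp only [asc]
  linear_combination (norm := abel) h

theorem asc_cyc (hR : IsAlternative R) (x y z : R) : asc x y z = asc y z x := by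
  rw [asc12 hR x y z, asc23 hR y x z, neg_neg]

theorem asc13 (hR : IsAlternative R) (x y z : R) : asc x y z = - asc z y x := by
  rw [asc_cyc hR x y z, asc12 hR y z x]

theorem asc_left (hR : IsAlternative R) (x y : R) : asc x x y = 0 := by
  simp only [asc, hR.1 x y, sub_self]

theorem asc_right (hR : IsAlternative R) (x y : R) : asc y x x = 0 := by
  simp only [asc, hR.2 x y, sub_self]

theorem asc_mid (hR : IsAlternative R) (x y : R) : asc x y x = 0 := by
  rw [asc_cyc hR, asc_right hR]

theorem flex (hR : IsAlternative R) (x y : R) : x * y * x = x * (y * x) :=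
  sub_eq_zero.mp (asc_mid hR x y)

theorem teich (p q r s : R) :
    asc (p * q) r s - asc p (q * r) s + asc p q (r * s) = p * asc q r s + asc p q r * s := by
  simp only [asc, mul_sub, sub_mul]
  abel

theorem kf_rel (hR : IsAlternative R) (w x y z : R) :
    kf w x y z - kf x y z w + kf y z w x =
      (w * asc x y z - asc x y z * w) - (x * asc y z w - asc y z w * x)
      + (y * asc z w x - asc z w x * y) - (z * asc w x y - asc w x y * z) := by
  have h := teich w x y z
  rw [asc_cyc hR w (x * y) z, asc_cyc hR w x (y * z), asc_cyc hR x (y * z) w] at h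
  simp only [kf]
  rw [asc_cyc hR w y z, asc_cyc hR x z w, asc_cyc hR y w x]
  linear_combination (norm := abel) h

theorem kf_cyc (hR : IsAlternative R) (w x y z : R) : kf w x y z = - kf z w x y := by
  have h1 := kf_rel hR w x y z
  have h2 := kf_rel hR x y z w
  linear_combination (norm := abel) h1 + h2

theorem kf34 (hR : IsAlternative R) (w x y z : R) : kf w x y z = - kf w x z y := by
  simp only [kf]
  rw [asc23 hR _ y z, asc23 hR w y z, asc23 hR x y z]
  simp only [mul_neg, neg_mul]
  abel

theorem kf23 (hR : IsAlternative R) (w x y z : R) : kf w x y z = - kf w y x z := by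
  rw [kf_cyc hR w x y z, kf34 hR z w x y, kf_cyc hR w y x z]

theorem kf12 (hR : IsAlternative R) (w x y z : R) : kf w x y z = - kf x w y z := by
  rw [kf_cyc hR w x y z, kf23 hR z w x y, kf_cyc hR x w y z]

theorem kf13 (hR : IsAlternative R) (w x y z : R) : kf w x y z = - kf y x w z := by
  rw [kf12 hR w x y z, kf23 hR x w y z, kf12 hR x y w z, neg_neg]

theorem kf24 (hR : IsAlternative R) (w x y z : R) : kf w x y z = - kf w z y x := by
  rw [kf34 hR w x y z, kf23 hR w x z y, kf34 hR w z x y, neg_neg]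

theorem kf_rev (hR : IsAlternative R) (w x y z : R) : kf w x y z = kf z y x w := by
  rw [kf_cyc hR w x y z, kf24 hR z w x y, neg_neg]

theorem asc_prod (w x y z : R) :
    asc (w * x) y z = kf w x y z + x * asc w y z + asc x y z * w := by
  simp only [kf]
  abel

/-- linearization of `(x, yx, z) = x (x, y, z)` -/
theorem bl1 (hR : IsAlternative R) (x y z w : R) :
    asc x (y * w) z + asc w (y * x) z = w * asc x y z + x * asc w y z := by
  rw [asc12 hR x (y * w) z, asc12 hR w (y * x) z, asc_prod, asc_prod, kf23 hR y w x z,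
    asc12 hR y x z, asc12 hR y w z, asc12 hR w x z]
  simp only [mul_neg, neg_mul]
  abel

/-- linearization of `(x, xy, z) = (x, y, z) x` -/
theorem bl2 (hR : IsAlternative R) (x y z w : R) :
    asc x (w * y) z + asc w (x * y) z = asc x y z * w + asc w y z * x := by
  rw [asc12 hR x (w * y) z, asc12 hR w (x * y) z, asc_prod, asc_prod, kf13 hR w y x z,
    asc12 hR y x z, asc12 hR y w z, asc12 hR w x z]
  simp only [mul_neg, neg_mul]
  abel

theorem b1 (hR : IsAlternative R) (x y z : R) : asc x (y * x) z = x * asc x y z := by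
  have h : kf y x x z = 0 := by
    rw [kf_cyc hR]
    simp [kf, asc_right hR]
  rw [asc12 hR, asc_prod, h, asc_left hR, asc12 hR y x z]
  simp

theorem b2 (hR : IsAlternative R) (x y z : R) : asc x (x * y) z = asc x y z * x := by
  have h : kf x y x z = 0 := by
    rw [kf12 hR, kf_cyc hR]
    simp [kf, asc_right hR]
  rw [asc12 hR, asc_prod, h, asc_left hR, asc12 hR y x z]
  simp

/-- left Moufang, linearized -/
theorem lml (hR : IsAlternative R) (z a p q : R) :
    z * (a * (p * q)) + p * (a * (z * q)) = (z * a * p) * q + (p * a * z) * q := by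
  have h1 := asc_prod z a p q
  have h2 := asc_prod p a z q
  have h3 := bl2 hR z q a p
  rw [kf13 hR z a p q, asc12 hR z p q] at h1
  rw [asc23 hR z (p * q) a, asc23 hR p (z * q) a, asc_cyc hR z q a, asc_cyc hR q a z,
    asc_cyc hR p q a, asc_cyc hR q a p] at h3
  have e1 : asc (z * a) p q + asc z a (p * q) = z * a * p * q - z * (a * (p * q)) := by
    simp only [asc]; abel
  have e2 : asc (p * a) z q + asc p a (z * q) = p * a * z * q - p * (a * (z * q)) := by
    simp only [asc]; abel
  simp only [mul_neg] at h1
  linear_combination (norm := abel) e1 + e2 - h1 - h2 + h3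

/-- right Moufang, linearized -/
theorem rml (hR : IsAlternative R) (z x y w : R) :
    ((z * x) * y) * w + ((z * w) * y) * x = z * (x * y * w) + z * (w * y * x) := by
  have h1 := asc_prod z x y w
  have h2 := asc_prod z w y x
  have h3 := bl1 hR x y z w
  rw [kf24 hR z x y w, asc13 hR z y w] at h1
  rw [asc13 hR z y x, asc13 hR w y x] at h2
  rw [← asc_cyc hR z x (y * w), ← asc_cyc hR z w (y * x)] at h3
  have e1 : asc (z * x) y w + asc z x (y * w)
      = z * x * y * w - z * (x * y * w) + z * asc x y w := by
    simp only [asc, mul_sub]; abel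
  have e2 : asc (z * w) y x + asc z w (y * x)
      = z * w * y * x - z * (w * y * x) - z * asc x y w := by
    rw [asc13 hR x y w]; simp only [asc, mul_sub, mul_neg]; abel
  simp only [mul_neg, neg_mul] at h1 h2
  linear_combination (norm := abel) h1 + h2 + h3 - e1 - e2

/-- middle Moufang, linearized -/
theorem mml (hR : IsAlternative R) (p q r s : R) :
    (p * q) * (r * s) + (s * q) * (r * p) = (p * (q * r)) * s + (s * (q * r)) * p := by
  have h1 := asc_prod p q r s
  have h2 := asc_prod s q r p
  rw [kf_cyc hR p q r s, kf12 hR s p q r, kf_cyc hR p s q r, kf_rev hR r p s q,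
    asc13 hR p r s, ← asc_cyc hR s q r] at h1
  rw [← asc_cyc hR p q r] at h2
  have h4 : kf q s p r = kf s q r p := by
    rw [kf12 hR q s p r, kf34 hR s q p r, neg_neg]
  rw [h4] at h1
  have e1 : asc (p * q) r s = p * (q * r) * s + asc p q r * s - p * q * (r * s) := by
    simp only [asc, sub_mul]; abel
  have e2 : asc (s * q) r p = s * (q * r) * p + asc s q r * p - s * q * (r * p) := by
    simp only [asc, sub_mul]; abel
  simp only [mul_neg, neg_mul] at h1 h2
  linear_combination (norm := abel) e1 + e2 - h1 - h2

theorem mm (hR : IsAlternative R) (x y z : R) : (x * y) * (z * x) = x * (y * z) * x := by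
  have h := b2 hR x y z
  rw [asc_cyc hR] at h
  have e1 : asc (x * y) z x = x * (y * z) * x + asc x y z * x - x * y * (z * x) := by
    simp only [asc, sub_mul]; abel
  linear_combination (norm := abel) e1 - h

theorem lm (hR : IsAlternative R) (x y z : R) : x * (y * (x * z)) = x * y * x * z := by
  have h1 := b2 hR x y z
  have h2 := b2 hR x z y
  rw [asc12 hR] at h1
  rw [asc23 hR, asc23 hR x z y] at h2
  simp only [neg_mul] at h2
  have e1 : asc (x * y) x z + asc x y (x * z) = x * y * x * z - x * (y * (x * z)) := by
    simp only [asc]; abel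
  linear_combination (norm := abel) h1 + h2 + e1

theorem rm (hR : IsAlternative R) (x y z : R) : ((z * x) * y) * x = z * (x * y * x) := by
  have h1 := b1 hR x y z
  have h2 := b1 hR x z y
  rw [← asc_cyc hR] at h1
  rw [asc_cyc hR, asc23 hR x z y] at h2
  simp only [mul_neg] at h2
  have e1 : asc (z * x) y x + asc z x (y * x) = z * x * y * x - z * (x * (y * x)) := by
    simp only [asc]; abel
  rw [flex hR x y]
  linear_combination (norm := abel) h1 + h2 - e1

theorem jid (hR : IsAlternative R) (x y z : R) :
    (x * y) * z * (x * y) = ((x * (y * z)) * x) * y := by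
  have h := mml hR (x * y) z x y
  have h1 := mm hR x y z
  have h2 := mm hR y z (x * x)
  have h3 := mm hR y (z * x) x
  rw [← hR.1 x y] at h
  rw [h1, h2, h3, hR.2 x z] at h
  exact add_right_cancel h

theorem jid2 (hR : IsAlternative R) (x y z : R) :
    (y * x) * z * (y * x) = y * (x * (z * y) * x) := by
  have h := mml hR y x z (y * x)
  have h1 := mm hR x z y
  have h2 := mm hR y (x * x) z
  have h3 := mm hR y x (x * z)
  have e1 := right_alt hR (x * z) y (y * x)
  have e2 := mml hR y x z (y * x)
  have e3 := asc23 hR y (x * z) (y * x)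
  have e4 := asc13 hR y (x * z) (y * x)
  simp only [asc] at e3 e4
  rw [hR.2 x y] at h
  rw [h2] at h
  rw [← hR.1 x z] at h3
  rw [h1] at e4
  rw [h3] at e4
  rw [flex hR (y * x) z]
  linear_combination (norm := abel) h + e4

end Alt

/-! ## Orthogonal pairs -/

/-- `a` and `b` are orthogonal: all products of `a`, `b` and at most one further element vanish. -/
structure Perp {R : Type*} [NonUnitalNonAssocRing R] (a b : R) : Prop where
  ab : a * b = 0
  ba : b * a = 0
  axb : ∀ x : R, a * x * b = 0
  axb' : ∀ x : R, a * (x * b) = 0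
  abx : ∀ x : R, a * (b * x) = 0
  xab : ∀ x : R, x * a * b = 0
  bxa : ∀ x : R, b * x * a = 0
  bxa' : ∀ x : R, b * (x * a) = 0
  bax : ∀ x : R, b * (a * x) = 0
  xba : ∀ x : R, x * b * a = 0

theorem Perp.symm {R : Type*} [NonUnitalNonAssocRing R] {a b : R} (h : Perp a b) : Perp b a :=
  ⟨h.ba, h.ab, h.bxa, h.bxa', h.bax, h.xba, h.axb, h.axb', h.abx, h.xab⟩

/-- The form `C(x,y) = (xa)(yb)`. -/
def cc {R : Type*} [NonUnitalNonAssocRing R] (a b x y : R) : R := (x * a) * (y * b)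

section PerpSec

variable {R : Type*} [NonUnitalNonAssocRing R]

theorem cc_add_left (a b x x' y : R) : cc a b (x + x') y = cc a b x y + cc a b x' y := by
  simp only [cc, add_mul]

theorem cc_sub_left (a b x x' y : R) : cc a b (x - x') y = cc a b x y - cc a b x' y := by
  simp only [cc, sub_mul]

theorem cc_add_right (a b x y y' : R) : cc a b x (y + y') = cc a b x y + cc a b x y' := by
  simp only [cc, add_mul, mul_add]

theorem cc_self (hR : IsAlternative R) {a b : R} (h1 : ∀ x : R, a * (x * b) = 0)
    (h2 : ∀ x : R, asc x a b = 0) (x : R) : cc a b x x = 0 := by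
  have e1 : x * a * x * b = 0 := by rw [← lm hR, h1, mul_zero]
  have e2 : asc (x * a) x b = 0 := by rw [asc12 hR, b2 hR, h2, zero_mul, neg_zero]
  have e3 : cc a b x x = x * a * x * b - asc (x * a) x b := by simp only [cc, asc]; abel
  rw [e3, e1, e2, sub_zero]

theorem cc_skew' (hR : IsAlternative R) {a b : R} (h1 : ∀ x : R, a * (x * b) = 0)
    (h2 : ∀ x : R, asc x a b = 0) (x y : R) : cc a b x y = - cc a b y x := by
  have h := cc_self hR h1 h2 (x + y)
  rw [cc_add_left, cc_add_right, cc_add_right, cc_self hR h1 h2 x, cc_self hR h1 h2 y] at h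
  linear_combination (norm := abel) h

theorem cc_skew (hR : IsAlternative R) {a b : R} (h : Perp a b) (x y : R) :
    cc a b x y = - cc a b y x :=
  cc_skew' hR h.axb' (fun x => by simp [asc, h.xab, h.ab]) x y

/-- `(x, a, yb) = C(x,y)` -/
theorem t0 {a b : R} (h : Perp a b) (x y : R) : asc x a (y * b) = cc a b x y := by
  simp only [asc, cc, h.axb', mul_zero, sub_zero]

/-- `(xb, a, y) = C(x,y)` -/
theorem t0' (hR : IsAlternative R) {a b : R} (h : Perp a b) (x y : R) :
    asc (x * b) a y = cc a b x y := by
  rw [asc13 hR, t0 h, ← cc_skew hR h]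

/-- `(xb)(ay) = -C(x,y)` -/
theorem t1 (hR : IsAlternative R) {a b : R} (h : Perp a b) (x y : R) :
    (x * b) * (a * y) = - cc a b x y := by
  rw [← t0' hR h]
  simp only [asc, h.xba, zero_mul]
  abel

/-- `a((xb)y) = C(x,y)` -/
theorem t2 (hR : IsAlternative R) {a b : R} (h : Perp a b) (x y : R) :
    a * ((x * b) * y) = cc a b x y := by
  rw [← t0' hR h, asc12 hR]
  simp only [asc, h.axb', zero_mul]
  abel

/-- `(x(ay))b = C(x,y)` -/
theorem t3 (hR : IsAlternative R) {a b : R} (h : Perp a b) (x y : R) :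
    (x * (a * y)) * b = cc a b x y := by
  have e := mml hR x a y b
  rw [h.ba, h.bax, zero_mul, zero_mul, add_zero, add_zero] at e
  exact e.symm

/-- `(ax)(by) = C(x,y)` -/
theorem t4 (hR : IsAlternative R) {a b : R} (h : Perp a b) (x y : R) :
    (a * x) * (b * y) = cc a b x y := by
  have e := mml hR a x b y
  have e2 := right_alt hR (x * b) a y
  rw [h.ba, h.axb', zero_mul, mul_zero] at e
  rw [h.axb', h.xba, mul_zero] at e2
  have e3 := cc_skew hR h x y
  have e4 : y * a * (x * b) = cc a b y x := rfl
  rw [e4] at e2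
  linear_combination (norm := abel) e + e2 - e3

/-- `a((by)x) = B(x,y)` -/
theorem t6 (hR : IsAlternative R) {a b : R} (h : Perp a b) (x y : R) :
    a * ((b * y) * x) = cc b a x y := by
  have e := asc12 hR a (b * y) x
  simp only [asc, h.abx, h.bxa, zero_mul, t4 hR h.symm] at e
  rw [cc_skew hR h.symm x y]
  linear_combination (norm := abel) -e

/-- `((ax)y)b = B(x,y)` -/
theorem t5 (hR : IsAlternative R) {a b : R} (h : Perp a b) (x y : R) :
    ((a * x) * y) * b = cc b a x y := by
  have e := rml hR a x y b
  rw [h.ab, h.axb', zero_mul, zero_mul, t6 hR h, add_zero, zero_add] at e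
  exact e

theorem cc_der (hR : IsAlternative R) {a b : R} (h : Perp a b) (x z y : R) :
    cc a b x (z * y) = z * cc a b x y + cc a b x z * y := by
  have e := lml hR z a (x * b) y
  rw [t2 hR h, t1 hR h, h.xba, zero_mul, zero_mul] at e
  have e2 : z * a * (x * b) = cc a b z x := rfl
  rw [e2, cc_skew hR h z x, neg_mul] at e
  linear_combination (norm := abel) -e

theorem cc_der' (hR : IsAlternative R) {a b : R} (h : Perp a b) (x z y : R) :
    cc a b (z * y) x = z * cc a b y x + cc a b z x * y := by
  rw [cc_skew hR h (z * y) x, cc_der hR h, cc_skew hR h x y, cc_skew hR h x z]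
  simp only [mul_neg, neg_mul]
  abel

/-- `(b,y,z)a = C(y,z)` -/
theorem ua (hR : IsAlternative R) {a b : R} (h : Perp a b) (y z : R) :
    asc b y z * a = cc a b y z := by
  rw [asc, sub_mul, h.bxa, sub_zero, t5 hR h.symm]

/-- `a(b,y,z) = -B(y,z)` -/
theorem au (hR : IsAlternative R) {a b : R} (h : Perp a b) (y z : R) :
    a * asc b y z = - cc b a y z := by
  rw [asc, mul_sub, h.abx, sub_zero, t6 hR h, cc_skew hR h.symm]

/-- the function `m` -/
def mf (a b x y z : R) : R := (x * b) * asc a y z + cc a b y z * x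

/-- the function `n` -/
def nf (a b x y z : R) : R := asc b y z * (a * x) - x * cc a b y z

theorem mf_nf (hR : IsAlternative R) {a b : R} (h : Perp a b) (x y z : R) :
    mf a b x y z = nf a b y z x := by
  have e1 := bl1 hR (x * b) a z y
  rw [h.axb', t0' hR h] at e1
  have e2 := bl2 hR (a * y) b z x
  rw [h.axb] at e2
  have e3 : asc (a * y) b z = - cc a b y z := by
    simp only [asc, h.axb, zero_mul, t4 hR h]; abel
  rw [e3, asc12 hR (a * y) (x * b) z, asc_cyc hR x b z] at e2
  have e4 : asc y 0 z = 0 := by simp [asc]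
  have e5 : asc x 0 z = 0 := by simp [asc]
  rw [e4, asc12 hR y a z] at e1
  rw [e5] at e2
  simp only [mf, nf]
  rw [cc_skew hR h z x]
  simp only [mul_neg, neg_mul] at *
  linear_combination (norm := abel) e1 + e2

theorem nf_skew (hR : IsAlternative R) {a b : R} (h : Perp a b) (x y z : R) :
    nf a b x y z = - nf a b x z y := by
  simp only [nf]
  rw [asc23 hR b y z, cc_skew hR h y z]
  simp only [mul_neg, neg_mul]
  abel

theorem mf_skew (hR : IsAlternative R) {a b : R} (h : Perp a b) (x y z : R) :
    mf a b x y z = - mf a b x z y := by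
  simp only [mf]
  rw [asc23 hR a y z, cc_skew hR h y z]
  simp only [mul_neg, neg_mul]
  abel

theorem mf_cyc (hR : IsAlternative R) {a b : R} (h : Perp a b) (x y z : R) :
    mf a b x y z = mf a b z x y := by
  rw [mf_nf hR h, nf_skew hR h, ← mf_nf hR h, mf_skew hR h, neg_neg]

theorem nf_eq (hR : IsAlternative R) {a b : R} (h : Perp a b) (x y z : R) :
    nf a b x y z = mf a b x y z := by
  rw [mf_cyc hR h x y z, mf_nf hR h]

theorem mf_swap (hR : IsAlternative R) {a b : R} (h : Perp a b) (x y z : R) :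
    mf a b y x z = - mf a b x y z := by
  rw [mf_cyc hR h x y z, mf_cyc hR h z x y, mf_skew hR h y z x, neg_neg]

/-- `the difference of the two m functions is [C - B, x]` -/
theorem mf_sub (hR : IsAlternative R) {a b : R} (h : Perp a b) (x y z : R) :
    mf a b x y z - mf b a x y z =
      (cc a b y z * x - x * cc a b y z) - (cc b a y z * x - x * cc b a y z) := by
  rw [← nf_eq hR h.symm]
  have e := asc13 hR (asc a y z) b x
  have e1 := ua hR h.symm y z
  have e2 := au hR h.symm y z
  simp only [mf, nf]
  have e3 : asc (asc a y z) b x = asc a y z * b * x - asc a y z * (b * x) := rfl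
  have e4 : asc x b (asc a y z) = x * b * asc a y z - x * (b * asc a y z) := rfl
  rw [e3, e4, e1, e2, mul_neg] at e
  linear_combination (norm := abel) e

theorem jacobi (hR : IsAlternative R) {a b : R} (h : Perp a b) (x y z : R) :
    (cc a b x y * z - z * cc a b x y) + (cc a b y z * x - x * cc a b y z)
      + (cc a b z x * y - y * cc a b z x) = 0 := by
  -- first evaluation of `g`
  have g1 : kf (x * b) a y z = - (y * cc a b z x) + cc a b z x * y
      + cc a b x y * z - z * cc a b x y := by
    rw [kf_rev hR, kf]
    rw [t0 h, t0 h, t0 h, cc_der' hR h, cc_skew hR h y x]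
    simp only [mul_neg, neg_mul]
    abel
  -- second evaluation
  have g2 : kf (x * b) a y z = (x * b) * asc a y z + asc (x * b) y z * a := by
    rw [kf12 hR, kf, h.axb']
    have e4 : asc 0 y z = 0 := by simp [asc]
    rw [e4]
    abel
  have g3 : asc (x * b) y z = - kf x y b z + b * asc x y z + asc b y z * x := by
    rw [asc_prod, kf23 hR x b y z]
  have g4 : kf x y b z = - asc b (x * y) z + y * asc b x z + asc b y z * x := by
    rw [kf, asc12 hR (x * y) b z, asc12 hR x b z, asc12 hR y b z]
    simp only [mul_neg, neg_mul]
    abel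
  have g5 : asc (x * b) y z * a = cc a b (x * y) z - y * asc b x z * a := by
    rw [g3, g4, ← ua hR h]
    have e := h.bxa (asc x y z)
    simp only [add_mul, neg_mul, e]
    abel
  have g6 := right_alt hR (asc b x z) a y
  rw [ua hR h, au hR h] at g6
  have g7 : y * a * asc b x z = - mf b a x y z - cc b a x z * y := by
    rw [← mf_swap hR h.symm, mf]; abel
  have g8 := mf_sub hR h x y z
  have g9 := mf_sub hR h y x z
  rw [mf_swap hR h, mf_swap hR h.symm] at g9
  have g10 : mf a b x y z = (x * b) * asc a y z + cc a b y z * x := rfl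
  have g11 := cc_der' hR h z x y
  rw [mul_neg] at g6
  linear_combination (norm := abel) g2 - g1 + g5 - g6 + g7 - g10 + g11 - g9

theorem cc_comm (hR : IsAlternative R) {a b : R} (h : Perp a b) (x y z : R) :
    cc a b x y * z - z * cc a b x y = cc a b (x * y - y * x) z := by
  have e := jacobi hR h x y z
  rw [cc_sub_left, cc_der' hR h, cc_der' hR h, cc_skew hR h x z]
  simp only [mul_neg, neg_mul] at *
  linear_combination (norm := abel) e

theorem cc_nuc (hR : IsAlternative R) (htf : ThreeTorsionFree R) {a b : R} (h : Perp a b)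
    (x y z w : R) : asc z w (cc a b x y) = 0 := by
  apply htf
  have e1 := cc_comm hR h x y z
  have e2 := cc_comm hR h x y w
  have e3 := cc_comm hR h x y (z * w)
  rw [cc_der hR h, ← e1, ← e2, mul_sub, sub_mul] at e3
  generalize cc a b x y = k at *
  have e4 : asc z w k = - asc z k w := asc23 hR z w k
  have e5 : asc z w k = asc k z w := (asc_cyc hR k z w).symm
  have e6 : asc z w k + - asc z k w + asc k z w = 0 := by
    simp only [asc]
    linear_combination (norm := abel) -e3
  rw [← e4, ← e5] at e6
  exact e6

/-- nuclear elements with `n z n = 0` vanish in prime rings -/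
theorem nuc_zero (hR : IsAlternative R) (hP : IsPrimeRing R) (n : R)
    (hn : ∀ x y : R, asc x y n = 0) (h2 : n * n = 0) (h3 : ∀ x : R, n * x * n = 0) : n = 0 := by
  by_contra hne
  have hm : ∀ x y : R, x * y * n = x * (y * n) := fun x y => sub_eq_zero.mp (hn x y)
  have key : ∀ p r z : R, asc p r z * n = asc p r (z * n) := by
    intro p r z
    have e := teich p r z n
    rw [hn, hn, hn, mul_zero] at e
    linear_combination (norm := abel) -e
  have key0 : ∀ p r : R, asc p r 0 = 0 := by intro p r; simp [asc]
  let P : Set R := {p | p * n = 0 ∧ ∀ z, p * z * n = 0}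
  let Q : Set R := {q | ∀ p ∈ P, p * q = 0}
  have hPI : IsTwoSidedIdealSet P := by
    refine ⟨by simp [P], ?_, ?_, ?_⟩
    · rintro p q ⟨h1, h2⟩ ⟨h3, h4⟩
      exact ⟨by rw [add_mul, h1, h3, add_zero], fun z => by
        rw [add_mul, add_mul, h2, h4, add_zero]⟩
    · rintro p ⟨h1, h2⟩
      exact ⟨by rw [neg_mul, h1, neg_zero], fun z => by rw [neg_mul, neg_mul, h2, neg_zero]⟩
    · rintro r p ⟨h1, h2⟩
      refine ⟨⟨by rw [hm, h1, mul_zero], fun z => ?_⟩, ⟨h2 r, fun z => ?_⟩⟩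
      · have e : r * p * z * n = r * (p * z) * n + asc r p z * n := by
          simp only [asc, sub_mul]; abel
        rw [e, hm, h2, mul_zero, asc_cyc hR, asc_cyc hR, asc_cyc hR, asc12 hR, asc23 hR, neg_neg,
          asc12 hR, asc_cyc hR, asc12 hR, neg_neg, ← asc_cyc hR, key, h1, key0, zero_add]
      · have e : p * r * z * n = p * (r * z) * n + asc p r z * n := by
          simp only [asc, sub_mul]; abel
        rw [e, h2, asc_cyc hR, key, h1, key0, zero_add]
  have hQI : IsTwoSidedIdealSet Q := by
    refine ⟨fun p _ => mul_zero p, ?_, ?_, ?_⟩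
    · intro q q' h h' p hp
      rw [mul_add, h p hp, h' p hp, add_zero]
    · intro q h p hp
      rw [mul_neg, h p hp, neg_zero]
    · intro r q h
      have e : ∀ p ∈ P, asc r p q = 0 := by
        intro p hp
        rw [asc, h p hp, h _ (hPI.2.2.2 r p hp).1, mul_zero, sub_zero]
      refine ⟨fun p hp => ?_, fun p hp => ?_⟩
      · have e1 := e p hp
        rw [asc12 hR, neg_eq_zero, asc, h _ (hPI.2.2.2 r p hp).2, zero_sub, neg_eq_zero] at e1
        exact e1
      · have e1 := e p hp
        rw [asc_cyc hR, asc, h p hp, zero_mul, zero_sub, neg_eq_zero] at e1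
        exact e1
  have hnP : n ∈ P := ⟨h2, h3⟩
  have hnQ : n ∈ Q := fun p hp => hp.1
  obtain ⟨p, hp, q, hq, hpq⟩ := hP P Q hPI hQI
    (fun h => hne (by rw [h] at hnP; exact hnP)) (fun h => hne (by rw [h] at hnQ; exact hnQ))
  exact hpq (hq p hp)

theorem cc_zero (hR : IsAlternative R) (htf : ThreeTorsionFree R) (hP : IsPrimeRing R) {a b : R}
    (h : Perp a b) (x y : R) : cc a b x y = 0 := by
  have hm : ∀ x y u v : R, u * v * cc a b x y = u * (v * cc a b x y) := fun x y u v =>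
    sub_eq_zero.mp (cc_nuc hR htf h x y u v)
  have hb : ∀ x y : R, b * cc a b x y = 0 := by
    intro x y
    rw [← t2 hR h, h.bax]
  have hmul : ∀ x y z w : R, cc a b x y * cc a b z w = 0 := by
    intro x y z w
    rw [← t3 hR h x y, hm, hb, mul_zero]
  refine nuc_zero hR hP _ (cc_nuc hR htf h x y) (hmul _ _ _ _) fun z => ?_
  have e := cc_comm hR h x y z
  have e1 : z * cc a b x y = cc a b x y * z - cc a b (x * y - y * x) z := by rw [← e]; abel
  rw [hm, e1, mul_sub, hmul, ← hR.1, hmul, zero_mul, sub_zero]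

theorem perp_left (hR : IsAlternative R) (htf : ThreeTorsionFree R) (hP : IsPrimeRing R) {a b : R}
    (h : Perp a b) (x : R) : Perp (a * x) b := by
  have hC := cc_zero hR htf hP h
  have hB := cc_zero hR htf hP h.symm
  refine ⟨h.axb x, h.bax x, fun y => ?_, fun y => ?_, fun y => ?_, fun y => ?_, fun y => ?_,
    fun y => ?_, fun y => ?_, fun y => ?_⟩
  · rw [t5 hR h, hB]
  · have e := right_alt hR y b (a * x)
    rw [t5 hR h, hB, h.axb, zero_mul, t4 hR h, hC] at e
    simpa using e.symm
  · rw [t4 hR h, hC]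
  · rw [t3 hR h, hC]
  · rw [t4 hR h.symm, hB]
  · have e := left_alt hR b y (a * x)
    rw [h.bax, t4 hR h.symm, hB, t1 hR h, hC] at e
    simpa using e.symm
  · rw [t6 hR h.symm, hC]
  · rw [t1 hR h, hC, neg_zero]

theorem perp_right (hR : IsAlternative R) (htf : ThreeTorsionFree R) (hP : IsPrimeRing R) {a b : R}
    (h : Perp a b) (x : R) : Perp (x * a) b := by
  have hC : ∀ x y : R, (x * a) * (y * b) = 0 := cc_zero hR htf hP h
  have hB : ∀ x y : R, (x * b) * (y * a) = 0 := cc_zero hR htf hP h.symm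
  have hB' : ∀ x y : R, (x * a) * (b * y) = 0 := fun x y => by
    rw [t1 hR h.symm, cc, hB, neg_zero]
  have hD : ∀ y x : R, (b * y) * (x * a) = 0 := fun y x => by
    have e := right_alt hR x a (b * y)
    rw [t5 hR h.symm, t4 hR h.symm, h.bxa, cc, cc, hB, hC] at e
    simpa using e.symm
  refine ⟨h.xab x, h.bxa' x, fun y => ?_, fun y => ?_, fun y => ?_, fun y => ?_, fun y => ?_,
    fun y => ?_, fun y => ?_, fun y => ?_⟩
  · have e := right_alt hR y b (x * a)
    rw [h.xab, hC, hB'] at e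
    simpa using e
  · exact hC x y
  · exact hB' x y
  · have e := right_alt hR (x * a) b y
    rw [h.xab, h.bxa', hB] at e
    simpa using e
  · exact hD y x
  · have e := left_alt hR b y (x * a)
    rw [h.bxa', hD, hB] at e
    simpa using e.symm
  · rw [t2 hR h.symm, cc, hB]
  · exact hB y x

theorem perp_add {a a' b : R} (h : Perp a b) (h' : Perp a' b) : Perp (a + a') b := by
  constructor <;> intros <;>
    simp only [add_mul, mul_add, h.ab, h.ba, h.axb, h.axb', h.abx, h.xab, h.bxa, h.bxa', h.bax,
      h.xba, h'.ab, h'.ba, h'.axb, h'.axb', h'.abx, h'.xab, h'.bxa, h'.bxa', h'.bax, h'.xba,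
      add_zero]

theorem perp_neg {a b : R} (h : Perp a b) : Perp (-a) b := by
  constructor <;> intros <;>
    simp only [neg_mul, mul_neg, h.ab, h.ba, h.axb, h.axb', h.abx, h.xab, h.bxa, h.bxa', h.bax,
      h.xba, neg_zero]

theorem perp_zero (b : R) : Perp 0 b := by
  constructor <;> intros <;> simp only [zero_mul, mul_zero]

theorem perp_ideal (hR : IsAlternative R) (htf : ThreeTorsionFree R) (hP : IsPrimeRing R)
    (S : Set R) : IsTwoSidedIdealSet {p : R | ∀ q ∈ S, Perp p q} :=
  ⟨fun q _ => perp_zero q, fun _ _ h h' q hq => perp_add (h q hq) (h' q hq),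
    fun _ h q hq => perp_neg (h q hq), fun r _ h =>
      ⟨fun q hq => perp_right hR htf hP (h q hq) r, fun q hq => perp_left hR htf hP (h q hq) r⟩⟩

theorem perp_prime (hR : IsAlternative R) (htf : ThreeTorsionFree R) (hP : IsPrimeRing R) {a b : R}
    (h : Perp a b) : a = 0 ∨ b = 0 := by
  by_contra hne
  push Not at hne
  let P : Set R := {p : R | ∀ q ∈ ({b} : Set R), Perp p q}
  let Q : Set R := {p : R | ∀ q ∈ P, Perp p q}
  have haP : a ∈ P := by
    intro q hq
    rw [Set.mem_singleton_iff.mp hq]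
    exact h
  have hbQ : b ∈ Q := fun q hq => (hq b rfl).symm
  obtain ⟨p, hp, q, hq, hpq⟩ := hP P Q (perp_ideal hR htf hP _) (perp_ideal hR htf hP _)
    (fun h => hne.1 (by rw [h] at haP; exact haP)) (fun h => hne.2 (by rw [h] at hbQ; exact hbQ))
  exact hpq (hq p hp).ba

/-- nondegeneracy -/
theorem nondeg (hR : IsAlternative R) (htf : ThreeTorsionFree R) (hP : IsPrimeRing R) (c : R)
    (hc : ∀ x : R, c * x * c = 0) : c = 0 := by
  have aux : ∀ d : R, d * d = 0 → (∀ x : R, d * x * d = 0) → d = 0 := by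
    intro d h2 h
    have h' : ∀ x : R, d * (x * d) = 0 := fun x => by rw [← flex hR, h]
    have hl : ∀ x : R, d * (d * x) = 0 := fun x => by rw [← hR.1, h2, zero_mul]
    have hr : ∀ x : R, x * d * d = 0 := fun x => by rw [hR.2, h2, mul_zero]
    exact (or_self_iff.mp (perp_prime hR htf hP ⟨h2, h2, h, h', hl, hr, h, h', hl, hr⟩))
  have h2 : c * c = 0 := by
    apply aux
    · rw [← hR.2, hc, zero_mul]
    · intro x
      rw [← hR.2, hR.1, hc, zero_mul]
  exact aux c h2 hc

end PerpSec

/-! ## The main argument -/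

section MainSec

variable {R : Type*} [NonUnitalNonAssocRing R]

/-- `(xa)((bx)b) = 0`. -/
theorem kk_self (hR : IsAlternative R) {a b : R} (H : ∀ x : R, a * x * b = 0)
    (hab : a * b = 0) (hba : b * a = 0) (x : R) : (x * a) * ((b * x) * b) = 0 := by
  have s : ∀ y : R, a * (b * y) = - (a * (y * b)) := fun y => by
    have e := right_alt hR b y a
    rw [hab, H, zero_mul, add_zero] at e
    exact eq_neg_of_add_eq_zero_left e.symm
  have e := mml hR x a (b * x) b
  rw [hba, zero_mul, add_zero, lm hR b a x, hba, zero_mul, zero_mul, zero_mul, add_zero, s,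
    mul_neg, neg_mul, lm hR x a b, hR.2, ← lm hR x a (b * b), ← hR.2, ← neg_neg (a * (x * b * b)),
    ← s, ← flex hR, ← rm hR b x a, hab, zero_mul, zero_mul] at e
  simpa using e

theorem kk_skew (hR : IsAlternative R) {a b : R} (H : ∀ x : R, a * x * b = 0)
    (hab : a * b = 0) (hba : b * a = 0) (x y : R) :
    (x * a) * ((b * y) * b) = - ((y * a) * ((b * x) * b)) := by
  have e := kk_self hR H hab hba (x + y)
  simp only [add_mul, mul_add, kk_self hR H hab hba, zero_add, add_zero] at e
  exact eq_neg_of_add_eq_zero_right e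

theorem e_zero (hR : IsAlternative R) (htf : ThreeTorsionFree R) (hP : IsPrimeRing R) {a b : R}
    (H : ∀ x : R, a * x * b = 0) (hab : a * b = 0) (hba : b * a = 0) (x : R) :
    x * a * b = 0 := by
  apply nondeg hR htf hP
  intro z
  rw [jid2 hR b (x * a) z, kk_skew hR H hab hba, neg_eq_zero]
  have hab' : a * ((b * x) * b) = 0 := by rw [← rm hR, hab, zero_mul, zero_mul]
  have hba' : ((b * x) * b) * a = 0 := by rw [← lm hR, hba, mul_zero, mul_zero]
  have H' : ∀ u : R, (a * u) * ((b * x) * b) = 0 := fun u => by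
    rw [← rm hR, H, zero_mul, zero_mul]
  have h1 : ∀ s : R, ((s * a) * a) * ((b * x) * b) = 0 := fun s => by
    have e := right_alt hR a ((b * x) * b) (s * a)
    rw [hab', hba', mul_zero, add_zero, rm hR, hab', zero_mul, mul_zero, add_zero] at e
    exact e
  have hc : ∀ u : R, (a * a * u) * b = 0 := fun u => by rw [hR.1, H]
  have hsk : ∀ u v : R, ((a * a * u) * v) * b = - (((a * a * v) * u) * b) := fun u v => by
    have e := congrArg (· * b) (right_alt hR u v (a * a))
    simp only [add_mul, hc, add_zero] at e
    exact eq_neg_of_add_eq_zero_left e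
  have h2 : ((a * a * z) * x) * ((b * x) * b) = 0 := by
    rw [← rm hR, rm hR x b, hsk, ← rm hR, hc, zero_mul, zero_mul, zero_mul, neg_zero]
  have h3 : (asc z x a * a) * ((b * x) * b) = 0 := by
    rw [← asc_cyc hR, ← b2 hR]
    simp only [asc, sub_mul]
    rw [H', ← hR.1, h2, sub_zero]
  have h4 : z * (x * a) = z * x * a - asc z x a := by simp only [asc]; abel
  rw [h4, sub_mul, sub_mul, h1, h3, sub_zero]

theorem main_dir (hR : IsAlternative R) (htf : ThreeTorsionFree R) (hP : IsPrimeRing R) {a b : R}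
    (H : ∀ x : R, a * x * b = 0) : a = 0 ∨ b = 0 := by
  have hab : a * b = 0 := by
    apply nondeg hR htf hP
    intro x
    rw [jid hR, flex hR, H]
  have hba : b * a = 0 := by
    apply nondeg hR htf hP
    intro x
    rw [jid hR, flex hR, H, mul_zero, zero_mul]
  have hxab : ∀ x : R, x * a * b = 0 := e_zero hR htf hP H hab hba
  have A : ∀ x : R, asc x a b = 0 := fun x => by simp only [asc, hxab, hab, mul_zero, sub_zero]
  have A1 : ∀ x : R, asc a x b = 0 := fun x => by rw [asc12 hR, A, neg_zero]
  have A2 : ∀ x : R, asc a b x = 0 := fun x => by rw [← asc_cyc hR, A]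
  have A3 : ∀ x : R, asc b x a = 0 := fun x => by rw [← asc_cyc hR, A2]
  have A4 : ∀ x : R, asc b a x = 0 := fun x => by rw [asc12 hR, A2, neg_zero]
  have A5 : ∀ x : R, asc x b a = 0 := fun x => by rw [← asc_cyc hR, A1]
  have axb : ∀ x : R, a * (x * b) = 0 := fun x => by
    have e := A1 x
    rw [asc, H, zero_sub, neg_eq_zero] at e
    exact e
  have abx : ∀ x : R, a * (b * x) = 0 := fun x => by
    have e := A2 x
    rw [asc, hab, zero_mul, zero_sub, neg_eq_zero] at e
    exact e
  have bax : ∀ x : R, b * (a * x) = 0 := fun x => by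
    have e := A4 x
    rw [asc, hba, zero_mul, zero_sub, neg_eq_zero] at e
    exact e
  have xba : ∀ x : R, x * b * a = 0 := fun x => by
    have e := A5 x
    rw [asc, hba, mul_zero, sub_zero] at e
    exact e
  have bxa : ∀ x : R, b * x * a = b * (x * a) := fun x => sub_eq_zero.mp (A3 x)
  have w0 : ∀ x : R, b * (x * a) = 0 := fun x => by
    have hab' : a * ((b * x) * b) = 0 := by rw [← rm hR, hab, zero_mul, zero_mul]
    have hba' : ((b * x) * b) * a = 0 := by rw [← lm hR, hba, mul_zero, mul_zero]
    have H' : ∀ u : R, (a * u) * ((b * x) * b) = 0 := fun u => by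
      rw [← rm hR, H, zero_mul, zero_mul]
    have E := e_zero hR htf hP H' hab' hba'
    apply nondeg hR htf hP
    intro y
    have e := cc_skew' hR axb A (b * x) y
    rw [cc, cc, E, neg_zero, bxa] at e
    rw [jid hR, ← mm hR, e, zero_mul]
  exact perp_prime hR htf hP
    ⟨hab, hba, H, axb, abx, hxab, fun x => by rw [bxa, w0], w0, bax, xba⟩

end MainSec

theorem prime_iff_aRb
    {R : Type*} [NonUnitalNonAssocRing R]
    (hR : IsAlternative R) (htf : ThreeTorsionFree R) :
    IsPrimeRing R ↔ ∀ a b : R, (∀ x : R, a * x * b = 0) → a = 0 ∨ b = 0 := by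
  constructor
  · intro hP a b H
    exact main_dir hR htf hP H
  · intro h A B hA hB hA0 hB0
    by_contra hne
    push Not at hne
    have nz : ∀ S : Set R, IsTwoSidedIdealSet S → S ≠ {0} → ∃ s ∈ S, s ≠ 0 := by
      intro S hS hS0
      by_contra hc
      push Not at hc
      exact hS0 (Set.eq_singleton_iff_unique_mem.mpr ⟨hS.1, hc⟩)
    obtain ⟨a, ha, ha0⟩ := nz A hA hA0
    obtain ⟨b, hb, hb0⟩ := nz B hB hB0
    rcases h a b (fun x => hne _ (hA.2.2.2 x a ha).2 b hb) with h0 | h0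
    · exact ha0 h0
    · exact hb0 h0
end

section
/- Let R be an alternative ring containing a nontrivial idempotent e₁ satisfying conditions (i) and (ii), and let D : R → R be a Lie triple derivable map. Then for any a₁₁ ∈ R₁₁ and any b ∈ R₁₂ ∪ R₂₁, there exists z ∈ Z(R) such that D(a₁₁ + b) = D(a₁₁) + D(b) + z. -/
theorem alt_swap12 {R : Type*} [NonUnitalNonAssocRing R] (hR : IsAlternative R) {x y z : R}
    (h : x * y * z = x * (y * z)) : y * x * z = y * (x * z) := by
  have h1 := hR.1 (x + y) z
  have h2 := hR.1 x z
  have h3 := hR.1 y z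
  simp only [mul_add, add_mul] at h1
  rw [h2, h3, h] at h1
  rw [← sub_eq_zero] at h1 ⊢
  rw [← h1]; abel

theorem alt_swap23 {R : Type*} [NonUnitalNonAssocRing R] (hR : IsAlternative R) {x y z : R}
    (h : x * y * z = x * (y * z)) : x * z * y = x * (z * y) := by
  have h1 := hR.2 (y + z) x
  have h2 := hR.2 y x
  have h3 := hR.2 z x
  simp only [mul_add, add_mul] at h1
  rw [h2, h3, h] at h1
  rw [← sub_eq_zero] at h1 ⊢
  rw [← h1]; abel

/-- If one associator vanishes, the five others do. -/
theorem alt_all {R : Type*} [NonUnitalNonAssocRing R] (hR : IsAlternative R) {x y z : R}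
    (h : x * y * z = x * (y * z)) :
    y * x * z = y * (x * z) ∧ x * z * y = x * (z * y) ∧ y * z * x = y * (z * x) ∧
    z * x * y = z * (x * y) ∧ z * y * x = z * (y * x) := by
  have h1 := alt_swap12 hR h
  have h2 := alt_swap23 hR h
  have h3 := alt_swap23 hR h1
  have h4 := alt_swap12 hR h2
  exact ⟨h1, h2, h3, h4, alt_swap23 hR h4⟩

theorem br_21 {R : Type*} [NonUnitalNonAssocRing R] (hR : IsAlternative R) {e s u m : R}
    (hs : s ∈ peirce11 e) (hu : u ∈ peirce22 e) (hm : m ∈ peirce21 e) :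
    lieBr (lieBr (s + u) m) e = lieBr (s + u) m := by
  obtain ⟨s1, s2⟩ := hs
  obtain ⟨u1, u2⟩ := hu
  obtain ⟨m1, m2⟩ := hm
  have A := alt_all hR (show m * e * s = m * (e * s) by rw [m2, s1])
  have B := alt_all hR (show u * e * m = u * (e * m) by rw [u2, m1]; simp)
  simp only [s1, s2, u1, u2, m1, m2, mul_zero, zero_mul] at A B
  obtain ⟨a1, a2, a3, a4, a5⟩ := A
  obtain ⟨b1, b2, b3, b4, b5⟩ := B
  simp only [lieBr, add_mul, mul_add, sub_mul, mul_sub]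
  simp [← a1, a2, a5, ← b1, b2, b5]

theorem br_12 {R : Type*} [NonUnitalNonAssocRing R] (hR : IsAlternative R) {e s u m : R}
    (hs : s ∈ peirce11 e) (hu : u ∈ peirce22 e) (hm : m ∈ peirce12 e) :
    lieBr (lieBr (s + u) m) e = - lieBr (s + u) m := by
  obtain ⟨s1, s2⟩ := hs
  obtain ⟨u1, u2⟩ := hu
  obtain ⟨m1, m2⟩ := hm
  have A := alt_all hR (show s * e * m = s * (e * m) by rw [m1, s2])
  have B := alt_all hR (show m * e * u = m * (e * u) by rw [u1, m2]; simp)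
  simp only [s1, s2, u1, u2, m1, m2, mul_zero, zero_mul] at A B
  obtain ⟨a1, a2, a3, a4, a5⟩ := A
  obtain ⟨b1, b2, b3, b4, b5⟩ := B
  simp only [lieBr, add_mul, mul_add, sub_mul, mul_sub]
  simp [← a1, a2, ← a5, ← b1, b2, ← b5]

theorem br_off {R : Type*} [NonUnitalNonAssocRing R] (hR : IsAlternative R) {e b m : R}
    (hb : b ∈ peirce12 e) (hm : m ∈ peirce21 e) :
    lieBr (lieBr b m) e = 0 ∧ lieBr (lieBr m b) e = 0 := by
  obtain ⟨b1, b2⟩ := hb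
  obtain ⟨m1, m2⟩ := hm
  have A := alt_all hR (show b * e * m = b * (e * m) by rw [b2, m1]; simp)
  simp only [b1, b2, m1, m2, mul_zero, zero_mul] at A
  obtain ⟨a1, a2, a3, a4, a5⟩ := A
  simp only [lieBr, sub_mul, mul_sub]
  simp [← a1, a2, ← a3, a4]

theorem lieBr_add_left' {R : Type*} [NonUnitalNonAssocRing R] (x y z : R) :
    lieBr (x + y) z = lieBr x z + lieBr y z := by
  simp only [lieBr, add_mul, mul_add]; abel

theorem defect_br {R : Type*} [NonUnitalNonAssocRing R] {D : R → R}
    (hD : IsLieTripleDerivable D) {a b y z : R}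
    (h : lieBr (lieBr a y) z = 0 ∨ lieBr (lieBr b y) z = 0) :
    lieBr (lieBr (D (a + b) - D a - D b) y) z = 0 := by
  have h0 : D 0 = 0 := by
    have := hD 0 0 0
    simpa [lieBr] using this
  have key : D (lieBr (lieBr (a + b) y) z) = D (lieBr (lieBr a y) z) + D (lieBr (lieBr b y) z) := by
    rw [lieBr_add_left', lieBr_add_left']
    rcases h with h | h <;> simp [h, h0]
  rw [hD, hD, hD] at key
  rw [← sub_eq_zero] at key
  rw [← key]
  simp only [lieBr, add_mul, mul_add, sub_mul, mul_sub]
  abel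

theorem diag_of_br {R : Type*} [NonUnitalNonAssocRing R] (hR : IsAlternative R) {e t : R}
    (he : e * e = e) (h : lieBr (lieBr t e) e = 0) :
    e * t ∈ peirce11 e ∧ t - e * t ∈ peirce22 e := by
  have l : e * (e * t) = e * t := by rw [← hR.1, he]
  have r : t * e * e = t * e := by rw [hR.2, he]
  have f : e * t * e = e * (t * e) := (alt_all hR (hR.1 e t |>.symm ▸ rfl : e * e * t = e * (e * t))).2.1
  have fl : e * (e * (t * e)) = e * (t * e) := by rw [← hR.1, he]
  have fr : e * (t * e) * e = e * (t * e) := by rw [← f, hR.2, he]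
  simp only [lieBr, sub_mul, mul_sub, l, r, f] at h
  have h1 : e * t = e * (t * e) := by
    have := congrArg (e * ·) h
    simp only [mul_sub, l, fl, mul_zero] at this
    rw [← sub_eq_zero, ← this]; abel
  have h2 : t * e = e * (t * e) := by
    have := congrArg (· * e) h
    simp only [sub_mul, r, f, fr, zero_mul] at this
    rw [← sub_eq_zero, ← this]; abel
  refine ⟨⟨l, ?_⟩, ?_, ?_⟩
  · rw [f, h1]
  · rw [mul_sub, l, sub_self]
  · rw [sub_mul, f, ← h2, sub_self]

theorem lieTripleDer_add_11_offdiag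
    {R : Type*} [NonUnitalNonAssocRing R] (hR : IsAlternative R)
    (e : R) (he : IsNontrivialIdempotent e) (hi : CondI e) (hii : CondII e)
    (D : R → R) (hD : IsLieTripleDerivable D) :
    ∀ a b : R, a ∈ peirce11 e → b ∈ peirce12 e ∪ peirce21 e →
      ∃ z ∈ ringCenter R, D (a + b) = D a + D b + z := by
  intro a b ha hb
  refine ⟨D (a + b) - D a - D b, ?_, by abel⟩
  set t := D (a + b) - D a - D b with ht
  have hae : lieBr (lieBr a e) e = 0 := by
    simp [lieBr, ha.1, ha.2]
  obtain ⟨h11, h22⟩ := diag_of_br hR he.1 (defect_br hD (b := b) (Or.inl hae))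
  rw [← ht] at h11 h22
  have hsum : e * t + (t - e * t) = t := by abel
  rw [← hsum]
  rcases hb with hb | hb
  · refine hii _ _ h11 h22 fun m hm => ?_
    rw [← br_21 hR h11 h22 hm, hsum]
    exact defect_br hD (Or.inr (br_off hR hb hm).1)
  · refine hi _ _ h11 h22 fun m hm => ?_
    rw [← neg_eq_zero, ← br_12 hR h11 h22 hm, hsum]
    exact defect_br hD (Or.inr (br_off hR hm hb).2)
end
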